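/- Let R be a commutative ring with unit containing the field of rational numbers, V an R-module, S = Sym_R(V) with its standard bialgebra structure (comultiplication Δ determined by Δ(x) = x⊗1 + 1⊗x for x ∈ V), and δ' : V → S ⊗_R S an R-linear map. Let δ : S → S ⊗_R S be the extension of δ' determined by the (m,δ)-compatibility δ(ab) = δ(a)·Δ(b) + Δ(a)·δ(b) (componentwise multiplication in S⊗S) and δ(1) = 0. If δ' is co-skew symmetric, i.e. σ∘δ' = −δ' where σ exchanges the tensor factors, then δ is co-skew symmetric on all of S. -/

import Mathlib

/-!
Call `d : A → B` a derivation along an algebra homomorphism `f : A → B` if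
`d(ab) = d(a) f(b) + f(a) d(b)`; such a map is determined by its values on algebra generators of
`A`. Let `σ` be the flip of `S ⊗ S`, which is an algebra automorphism. Since `σ ∘ Δ = Δ` (compare
on the generators `V`), both `σ ∘ δ` and `-δ` are derivations along `Δ`. They agree on `V`, hence
everywhere.
-/

noncomputable section

open MvPolynomial in
/-- The ideal of linearity relations presenting the symmetric algebra of the module `V`
as a quotient of the polynomial algebra on the set `V`. -/
def symIdeal (R V : Type) [CommRing R] [AddCommGroup V] [Module R V] :
    Ideal (MvPolynomial V R) :=
  Ideal.span
    ({p | ∃ v w : V, p = X (v + w) - X v - X w} ∪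
     {p | ∃ (r : R) (v : V), p = X (r • v) - C r * X v})

/-- The symmetric algebra `Sym_R(V)` of an `R`-module `V`. -/
abbrev SymmAlg (R V : Type) [CommRing R] [AddCommGroup V] [Module R V] : Type :=
  MvPolynomial V R ⧸ symIdeal R V

open MvPolynomial in
/-- The canonical linear inclusion `V → Sym_R(V)`. -/
def symι (R V : Type) [CommRing R] [AddCommGroup V] [Module R V] :
    V →ₗ[R] SymmAlg R V where
  toFun v := Ideal.Quotient.mk (symIdeal R V) (X v)
  map_add' v w := by
    rw [← map_add, Ideal.Quotient.eq]
    exact Ideal.subset_span (Or.inl ⟨v, w, by ring⟩)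
  map_smul' r v := by
    simp only [RingHom.id_apply]
    rw [show r • (Ideal.Quotient.mk (symIdeal R V)) (X v)
          = Ideal.Quotient.mk (symIdeal R V) (r • X v) from
        (map_smul (Ideal.Quotient.mkₐ R (symIdeal R V)) r (X v)).symm]
    rw [show r • (X v : MvPolynomial V R) = C r * X v from by rw [smul_eq_C_mul]]
    rw [Ideal.Quotient.eq]
    exact Ideal.subset_span (Or.inr ⟨r, v, by ring⟩)


open scoped TensorProduct

/-- `d` is a derivation along the algebra homomorphism `f`, that is, a derivation into `B` viewed
as an `A`-bimodule through `f`. For `f` the comultiplication this is `(m,δ)`-compatibility. It is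
a predicate rather than a `Derivation` so that neither algebra has to be commutative. -/
def IsDerivationAlong {R A B : Type*} [CommSemiring R] [Semiring A] [Algebra R A] [Semiring B]
    [Algebra R B] (f : A →ₐ[R] B) (d : A →ₗ[R] B) : Prop :=
  ∀ a b : A, d (a * b) = d a * f b + f a * d b

namespace IsDerivationAlong

section Semiring

variable {R A B C : Type*} [CommSemiring R] [Semiring A] [Algebra R A] [Semiring B] [Algebra R B]
  [Semiring C] [Algebra R C] {f : A →ₐ[R] B} {d : A →ₗ[R] B}

theorem algHom_comp (hd : IsDerivationAlong f d) (g : B →ₐ[R] C) :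
    IsDerivationAlong (g.comp f) (g.toLinearMap ∘ₗ d) := fun a b => by
  simp only [LinearMap.comp_apply, AlgHom.toLinearMap_apply, AlgHom.comp_apply, hd a b, map_add,
    map_mul]

end Semiring

section Ring

variable {R A B : Type*} [CommSemiring R] [Semiring A] [Algebra R A] [Ring B] [Algebra R B]
  {f : A →ₐ[R] B} {d d' : A →ₗ[R] B}

theorem neg (hd : IsDerivationAlong f d) : IsDerivationAlong f (-d) := fun a b => by
  simp only [LinearMap.neg_apply, hd a b, neg_add, neg_mul, mul_neg]

theorem map_one_eq_zero (hd : IsDerivationAlong f d) : d 1 = 0 := by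
  simpa only [mul_one, one_mul, map_one, left_eq_add] using hd 1 1

theorem map_algebraMap (hd : IsDerivationAlong f d) (r : R) : d (algebraMap R A r) = 0 := by
  rw [Algebra.algebraMap_eq_smul_one, map_smul, hd.map_one_eq_zero, smul_zero]

theorem ext_of_adjoin_eq_top (hd : IsDerivationAlong f d) (hd' : IsDerivationAlong f d')
    {s : Set A} (hs : Algebra.adjoin R s = ⊤) (h : s.EqOn d d') : d = d' := by
  ext a
  have ha : a ∈ Algebra.adjoin R s := hs ▸ Algebra.mem_top
  induction ha using Algebra.adjoin_induction with
  | mem x hx => exact h hx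
  | algebraMap r => rw [hd.map_algebraMap, hd'.map_algebraMap]
  | add a b _ _ iha ihb => rw [map_add, map_add, iha, ihb]
  | mul a b _ _ iha ihb => rw [hd, hd', iha, ihb]

end Ring

end IsDerivationAlong

theorem adjoin_range_symι (R V : Type) [CommRing R] [AddCommGroup V] [Module R V] :
    Algebra.adjoin R (Set.range (symι R V)) = ⊤ := by
  have range_eq : Set.range (symι R V) =
      Ideal.Quotient.mkₐ R (symIdeal R V) '' Set.range MvPolynomial.X :=
    Set.range_comp (Ideal.Quotient.mkₐ R (symIdeal R V)) MvPolynomial.X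
  rw [range_eq, ← AlgHom.map_adjoin, MvPolynomial.adjoin_range_X, Algebra.map_top,
    AlgHom.range_eq_top]
  exact Ideal.Quotient.mkₐ_surjective R (symIdeal R V)

theorem comm_tmul_one_add_one_tmul {R A : Type*} [CommSemiring R] [Semiring A] [Algebra R A]
    (x : A) :
    TensorProduct.comm R A A (x ⊗ₜ[R] 1 + 1 ⊗ₜ[R] x) = x ⊗ₜ[R] 1 + 1 ⊗ₜ[R] x := by
  rw [map_add, TensorProduct.comm_tmul, TensorProduct.comm_tmul, add_comm]

theorem statement5_general {R A : Type*} [CommSemiring R] [Ring A] [Algebra R A] {s : Set A}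
    (hs : Algebra.adjoin R s = ⊤) {Delta : A →ₐ[R] A ⊗[R] A}
    (hDelta : ∀ x ∈ s, TensorProduct.comm R A A (Delta x) = Delta x)
    {delta : A →ₗ[R] A ⊗[R] A} (hdelta : IsDerivationAlong Delta delta)
    (hcoskew : ∀ x ∈ s, TensorProduct.comm R A A (delta x) = -delta x) (a : A) :
    TensorProduct.comm R A A (delta a) = -delta a := by
  let flip : A ⊗[R] A →ₐ[R] A ⊗[R] A := (Algebra.TensorProduct.comm R A A).toAlgHom
  have cocomm : flip.comp Delta = Delta := AlgHom.ext_of_adjoin_eq_top hs hDelta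
  have flip_delta : IsDerivationAlong Delta (flip.toLinearMap ∘ₗ delta) :=
    cocomm ▸ hdelta.algHom_comp flip
  exact LinearMap.congr_fun (flip_delta.ext_of_adjoin_eq_top hdelta.neg hs hcoskew) a

/-- **Lemma 4.1(1).** Let `S = Sym_R(V)` with its standard bialgebra structure, and let
`δ : S → S ⊗ S` be the extension of a linear map `δ' : V → S ⊗ S` determined by the
`(m,δ)`-compatibility `δ(ab) = δ(a)·Δ(b) + Δ(a)·δ(b)` and `δ(1) = 0`.  If `δ'` is
co-skew symmetric on `V` then `δ` is co-skew symmetric on all of `S`. -/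
theorem statement5 {R : Type} [CommRing R] [Algebra ℚ R]
    {V : Type} [AddCommGroup V] [Module R V]
    (delta' : V →ₗ[R] SymmAlg R V ⊗[R] SymmAlg R V)
    (Delta : SymmAlg R V →ₐ[R] SymmAlg R V ⊗[R] SymmAlg R V)
    (hDelta : ∀ x : V, Delta (symι R V x) = symι R V x ⊗ₜ[R] 1 + 1 ⊗ₜ[R] symι R V x)
    (delta : SymmAlg R V →ₗ[R] SymmAlg R V ⊗[R] SymmAlg R V)
    (hext : ∀ x : V, delta (symι R V x) = delta' x)
    (hone : delta 1 = 0)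
    (hcompat : ∀ a b : SymmAlg R V, delta (a * b) = delta a * Delta b + Delta a * delta b)
    (hcoskew' : ∀ x : V,
      TensorProduct.comm R (SymmAlg R V) (SymmAlg R V) (delta' x) = - delta' x) :
    ∀ a : SymmAlg R V,
      TensorProduct.comm R (SymmAlg R V) (SymmAlg R V) (delta a) = - delta a :=
  statement5_general (adjoin_range_symι R V)
    (Set.forall_mem_range.2 fun x => hDelta x ▸ comm_tmul_one_add_one_tmul (symι R V x)) hcompat
    (Set.forall_mem_range.2 fun x => hext x ▸ hcoskew' x)

end
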